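/- Let 0 < k < n ≤ m, θ a generator of Gal(F_{q^m}/F_q), and C an [n,k]_{q^m} code with minimum rank distance greater than 1 such that dim(C + θ(C)) = k+1 and dim(Σ_{j=0}^{n-k} θ^j(C)) = n. Then C is a θ-Gabidulin code, i.e., C = G_{k,θ}(g) for some g ∈ F_{q^m}^n with rk_q(g) = n. -/

import Mathlib

open Submodule

noncomputable section

variable {E : Type} [Field E]

instance (σ : E ≃+* E) : RingHomSurjective (σ : E →+* E) := ⟨σ.surjective⟩

/-- Entrywise application of a field automorphism to vectors, as a semilinear map. -/
def entrywiseR {n : ℕ} (σ : E ≃+* E) :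
    (Fin n → E) →ₛₗ[(σ : E →+* E)] (Fin n → E) where
  toFun v := fun i => σ (v i)
  map_add' x y := by funext i; simp
  map_smul' r x := by funext i; simp [smul_eq_mul, map_mul]

/-- Image of a code under entrywise application of a ring automorphism. -/
def mapCodeR {n : ℕ} (σ : E ≃+* E) (C : Submodule E (Fin n → E)) :
    Submodule E (Fin n → E) :=
  C.map (entrywiseR σ)

/-- Image of a code under entrywise application of an F-algebra automorphism. -/
def mapCode {F : Type} [Field F] [Algebra F E] {n : ℕ} (σ : E ≃ₐ[F] E)
    (C : Submodule E (Fin n → E)) : Submodule E (Fin n → E) :=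
  mapCodeR σ.toRingEquiv C

/-- Right action of a matrix over the base field on a code. -/
def matAct (F : Type) [Field F] [Algebra F E] {n : ℕ} (A : Matrix (Fin n) (Fin n) F)
    (C : Submodule E (Fin n → E)) : Submodule E (Fin n → E) :=
  C.map ((A.map (algebraMap F E)).vecMulLinear)

/-- Semilinear equivalence of rank-metric codes: C₁ = τ(C₂)·A. -/
def CodeEquiv (F : Type) [Field F] [Algebra F E] {n : ℕ}
    (C₁ C₂ : Submodule E (Fin n → E)) : Prop :=
  ∃ (τ : E ≃+* E) (A : Matrix (Fin n) (Fin n) F), IsUnit A ∧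
    C₁ = matAct F A (mapCodeR τ C₂)

/-- Gabidulin code. -/
def Gab {F : Type} [Field F] [Algebra F E] {n : ℕ} (θ : E ≃ₐ[F] E) (k : ℕ)
    (g : Fin n → E) : Submodule E (Fin n → E) :=
  Submodule.span E (Set.range fun j : Fin k => fun i => (θ ^ (j : ℕ)) (g i))

/-- Sum of the images of C under the first i+1 powers of σ. -/
def sumCode {F : Type} [Field F] [Algebra F E] {n : ℕ} (σ : E ≃ₐ[F] E) (i : ℕ)
    (C : Submodule E (Fin n → E)) : Submodule E (Fin n → E) :=
  ⨆ j : Fin (i + 1), mapCode (σ ^ (j : ℕ)) C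

/-- Intersection of the images of C under the first i+1 powers of σ. -/
def interCode {F : Type} [Field F] [Algebra F E] {n : ℕ} (σ : E ≃ₐ[F] E) (i : ℕ)
    (C : Submodule E (Fin n → E)) : Submodule E (Fin n → E) :=
  ⨅ j : Fin (i + 1), mapCode (σ ^ (j : ℕ)) C

/-- Dual code with respect to the standard inner product. -/
def dualCode {n : ℕ} (C : Submodule E (Fin n → E)) : Submodule E (Fin n → E) where
  carrier := {u | ∀ v ∈ C, ∑ i, u i * v i = 0}
  add_mem' := by
    intro a b ha hb v hv
    simp only [Set.mem_setOf_eq] at *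
    simp only [Pi.add_apply, add_mul, Finset.sum_add_distrib, ha v hv, hb v hv, add_zero]
  zero_mem' := by intro v hv; simp
  smul_mem' := by
    intro c a ha v hv
    simp only [Set.mem_setOf_eq] at *
    simp only [Pi.smul_apply, smul_eq_mul, mul_assoc, ← Finset.mul_sum, ha v hv, mul_zero]

/-- Twisted Gabidulin code. -/
def TGab {F : Type} [Field F] [Algebra F E] {n : ℕ} (θ : E ≃ₐ[F] E) (k : ℕ) (η : E)
    (g : Fin n → E) : Submodule E (Fin n → E) :=
  Submodule.span E
    (insert (fun i => g i + η * (θ ^ k) (g i))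
      (Set.range fun j : Fin (k - 1) => fun i => (θ ^ ((j : ℕ) + 1)) (g i)))

theorem aux_mem_map {F : Type} [Field F] [Algebra F E] {n : ℕ} (σ : E ≃ₐ[F] E)
    (C : Submodule E (Fin n → E)) (v : Fin n → E) :
    v ∈ mapCode σ C ↔ ∃ w ∈ C, (fun i => σ (w i)) = v := by
  unfold mapCode mapCodeR
  rw [Submodule.mem_map]
  rfl

theorem aux_finrank_map {F : Type} [Field F] [Algebra F E] [Fintype E] {n : ℕ} (σ : E ≃ₐ[F] E)
    (C : Submodule E (Fin n → E)) :
    Module.finrank E (mapCode σ C) = Module.finrank E C := by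
  have h1 := Module.natCard_eq_pow_finrank (K := E) (V := C)
  have h2 := Module.natCard_eq_pow_finrank (K := E) (V := mapCode σ C)
  have h3 : Nat.card (mapCode σ C) = Nat.card C := by
    symm
    refine Nat.card_eq_of_bijective
      (fun w : C => (⟨fun i => σ (w.1 i), (aux_mem_map σ C _).2 ⟨w.1, w.2, rfl⟩⟩ :
        mapCode σ C)) ⟨?_, ?_⟩
    · intro a b hab
      apply Subtype.ext
      funext i
      have := congrFun (congrArg Subtype.val hab) i
      exact σ.injective this
    · rintro ⟨v, hv⟩
      obtain ⟨w, hw, rfl⟩ := (aux_mem_map σ C _).1 hv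
      exact ⟨⟨w, hw⟩, rfl⟩
  rw [h1, h2] at h3
  exact Nat.pow_right_injective (a := Nat.card E)
    (by rw [Nat.card_eq_fintype_card]; exact Fintype.one_lt_card) h3

theorem aux_descent {F : Type} [Field F] [Algebra F E] {n : ℕ} (θ : E ≃ₐ[F] E)
    (W : Submodule E (Fin n → E)) (hW : mapCode θ W ≤ W) (h0 : W ≠ ⊥) :
    ∃ w ∈ W, w ≠ 0 ∧ ∀ i, θ (w i) = w i := by
  classical
  obtain ⟨w0, hw0, hw0'⟩ := Submodule.exists_mem_ne_zero_of_ne_bot h0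
  let S : Set (Fin n → E) := {w | w ∈ W ∧ w ≠ 0}
  let f : (Fin n → E) → ℕ := fun w => (Finset.univ.filter fun i => w i ≠ 0).card
  have hS : S.Nonempty := ⟨w0, hw0, hw0'⟩
  obtain ⟨w, ⟨hwW, hw⟩, hmin⟩ : ∃ w ∈ S, ∀ v ∈ S, f w ≤ f v := by
    refine ⟨Function.argminOn f S hS, Function.argminOn_mem _ _ _, fun v hv => ?_⟩
    exact Function.argminOn_le _ _ hv
  obtain ⟨i, hi⟩ : ∃ i, w i ≠ 0 := by
    by_contra! h
    exact hw (funext h)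
  let u : Fin n → E := (w i)⁻¹ • w
  have hui : u i = 1 := by simp [u, hi]
  have huW : u ∈ W := W.smul_mem _ hwW
  have hz : ∀ j, u j = 0 ↔ w j = 0 := by intro j; simp [u, hi]
  refine ⟨u, huW, fun h => ?_, ?_⟩
  · rw [h] at hui; simp at hui
  let d : Fin n → E := (fun j => θ (u j)) - u
  have hdW : d ∈ W := W.sub_mem (hW ((aux_mem_map θ W _).2 ⟨u, huW, rfl⟩)) huW
  have hd : d = 0 := by
    by_contra hd
    have h1 := hmin d ⟨hdW, hd⟩
    have h2 : f d < f w := by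
      apply Finset.card_lt_card
      rw [Finset.ssubset_iff_of_subset]
      · exact ⟨i, by simp [hi], by simp [d, hui]⟩
      · intro j hj
        simp only [Finset.mem_filter, Finset.mem_univ, true_and] at hj ⊢
        intro hwj
        apply hj
        simp [d, (hz j).2 hwj]
    omega
  intro j
  have := congrFun hd j
  simpa [d, sub_eq_zero] using this

theorem aux_Gab_succ {F : Type} [Field F] [Algebra F E] {n : ℕ} (θ : E ≃ₐ[F] E) (k : ℕ)
    (g : Fin n → E) :
    Gab θ (k + 1) g ⊔ mapCode θ (Gab θ (k + 1) g) = Gab θ (k + 2) g := by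
  have hgen : ∀ (K j : ℕ), j < K → (fun i => (θ ^ j) (g i)) ∈ Gab θ K g := fun K j hj =>
    Submodule.subset_span ⟨⟨j, hj⟩, rfl⟩
  apply le_antisymm
  · apply sup_le
    · apply Submodule.span_le.2
      rintro _ ⟨j, rfl⟩
      exact hgen _ _ (by omega)
    · unfold mapCode mapCodeR
      rw [Submodule.map_le_iff_le_comap]
      apply Submodule.span_le.2
      rintro _ ⟨j, rfl⟩
      have := hgen (k + 2) (j + 1) (by omega)
      rw [pow_succ'] at this
      exact this
  · apply Submodule.span_le.2
    rintro _ ⟨⟨j, hj⟩, rfl⟩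
    rcases j with _ | j
    · exact Submodule.mem_sup_left (hgen _ 0 (by omega))
    · apply Submodule.mem_sup_right
      refine (aux_mem_map θ _ _).2 ⟨_, hgen (k + 1) j (by omega), ?_⟩
      simp only [pow_succ']
      rfl

theorem aux_ind {F : Type} [Field F] [Algebra F E] [Fintype E] {n : ℕ} (θ : E ≃ₐ[F] E) (k : ℕ) :
    ∀ C : Submodule E (Fin n → E), Module.finrank E C = k + 1 →
      Module.finrank E (C ⊔ mapCode θ C : Submodule E (Fin n → E)) ≤ k + 2 →
      (∀ W ≤ C, mapCode θ W ≤ W → W = ⊥) → ∃ g, C = Gab θ (k + 1) g := by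
  induction k with
  | zero =>
    intro C hC _ _
    obtain ⟨⟨g, hg⟩, hg0, hspan⟩ := finrank_eq_one_iff'.1 (by simpa using hC)
    refine ⟨g, le_antisymm ?_ ?_⟩
    · intro w hw
      obtain ⟨c, hc⟩ := hspan ⟨w, hw⟩
      have hc' : c • g = w := congrArg Subtype.val hc
      rw [← hc']
      exact Submodule.smul_mem _ _ (Submodule.subset_span ⟨0, by simp⟩)
    · apply Submodule.span_le.2
      rintro _ ⟨j, rfl⟩
      have : j = 0 := Fin.ext (by have := j.2; omega)
      subst this
      simpa using hg
  | succ k ih =>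
    intro C hC hsup hinv
    have hCne : ∀ D : Submodule E (Fin n → E), 0 < Module.finrank E D → D ≠ ⊥ := by
      rintro D hD rfl
      simp at hD
    let C' : Submodule E (Fin n → E) := C ⊓ C.comap (entrywiseR θ.toRingEquiv)
    have hmap : mapCode θ C' = C ⊓ mapCode θ C := by
      ext v
      rw [Submodule.mem_inf, aux_mem_map, aux_mem_map]
      constructor
      · rintro ⟨w, ⟨hw1, hw2⟩, rfl⟩
        exact ⟨hw2, w, hw1, rfl⟩
      · rintro ⟨hv, w, hw, rfl⟩
        exact ⟨w, ⟨hw, hv⟩, rfl⟩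
    have hdim := Submodule.finrank_sup_add_finrank_inf_eq C (mapCode θ C)
    rw [aux_finrank_map, ← hmap, aux_finrank_map, hC] at hdim
    have hle : Module.finrank E C' ≤ k + 2 := by
      rw [← hC]
      exact Submodule.finrank_mono inf_le_left
    have hne : Module.finrank E C' ≠ k + 2 := by
      intro h
      have hCC : C' = C := Submodule.eq_of_le_of_finrank_eq inf_le_left (by rw [h, hC])
      rw [hCC] at hmap
      exact hCne C (by omega) (hinv C le_rfl (hmap.le.trans inf_le_left))
    have hC' : Module.finrank E C' = k + 1 := by omega
    have hsub : C' ⊔ mapCode θ C' ≤ C := sup_le inf_le_left (hmap.le.trans inf_le_left)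
    have hsle : Module.finrank E (C' ⊔ mapCode θ C' : Submodule E (Fin n → E)) ≤ k + 2 := by
      have := Submodule.finrank_mono hsub
      omega
    obtain ⟨g, hg⟩ := ih C' hC' hsle
      (fun W hW h => hinv W (hW.trans inf_le_left) h)
    refine ⟨g, ?_⟩
    rw [← aux_Gab_succ, ← hg]
    symm
    apply Submodule.eq_of_le_of_finrank_eq hsub
    have hge : Module.finrank E C' ≤
        Module.finrank E (C' ⊔ mapCode θ C' : Submodule E (Fin n → E)) :=
      Submodule.finrank_mono le_sup_left
    by_contra hcon
    have heq : C' = C' ⊔ mapCode θ C' :=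
      Submodule.eq_of_le_of_finrank_eq le_sup_left (by omega)
    exact hCne C' (by omega) (hinv C' inf_le_left (le_sup_right.trans heq.ge))

/-- characterization of Gabidulin codes: if `d(C) > 1`,
`dim(C + θ(C)) = k+1` and `dim(Σ_{j=0}^{n-k} θ^j(C)) = n`, then `C` is a
θ-Gabidulin code. -/
theorem stmt18 {F : Type} [Field F] [Algebra F E] [Fintype F] [Fintype E]
    (q m n k : ℕ) (hq : IsPrimePow q)
    (hF : Fintype.card F = q) (hE : Fintype.card E = q ^ m)
    (hk : 0 < k) (hkn : k < n) (hnm : n ≤ m)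
    (θ : E ≃ₐ[F] E) (hθ : ∀ τ : E ≃ₐ[F] E, τ ∈ Subgroup.zpowers θ)
    (C : Submodule E (Fin n → E)) (hC : Module.finrank E C = k)
    (hdist : ∀ c ∈ C, c ≠ 0 → 1 < Module.finrank F (Submodule.span F (Set.range c)))
    (hs1 : Module.finrank E (sumCode θ 1 C) = k + 1)
    (hsn : Module.finrank E (sumCode θ (n - k) C) = n) :
    ∃ g : Fin n → E,
      Module.finrank F (Submodule.span F (Set.range g)) = n ∧ C = Gab θ k g := by
  classical
  have hinv : ∀ W ≤ C, mapCode θ W ≤ W → W = ⊥ := by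
    intro W hWC hW
    by_contra h0
    obtain ⟨w, hwW, hw0, hfix⟩ := aux_descent θ W hW h0
    have h1 := hdist w (hWC hwW) hw0
    have hbase : ∀ i, ∃ a : F, algebraMap F E a = w i := by
      intro i
      apply (IsGalois.mem_range_algebraMap_iff_fixed (F := F) (w i)).2
      intro τ
      have hst : θ ∈ MulAction.stabilizer (E ≃ₐ[F] E) (w i) := hfix i
      exact ((Subgroup.zpowers_le (H := MulAction.stabilizer (E ≃ₐ[F] E) (w i))).2 hst) (hθ τ)
    have h2 : Submodule.span F (Set.range w) ≤ Submodule.span F {(1 : E)} := by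
      apply Submodule.span_le.2
      rintro _ ⟨i, rfl⟩
      obtain ⟨a, ha⟩ := hbase i
      exact Submodule.mem_span_singleton.2 ⟨a, by rw [← ha, Algebra.algebraMap_eq_smul_one]⟩
    have h3 := Submodule.finrank_mono h2
    have h4 : Module.finrank F (Submodule.span F {(1 : E)}) = 1 :=
      finrank_span_singleton one_ne_zero
    omega
  have hsup : C ⊔ mapCode θ C ≤ sumCode θ 1 C := by
    unfold sumCode
    apply sup_le
    · refine le_trans ?_ (le_iSup _ (0 : Fin 2))
      intro v hv
      exact (aux_mem_map _ _ _).2 ⟨v, hv, by simp⟩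
    · refine le_trans ?_ (le_iSup _ (1 : Fin 2))
      simp
  obtain ⟨k, rfl⟩ : ∃ k', k = k' + 1 := ⟨k - 1, by omega⟩
  obtain ⟨g, hg⟩ := aux_ind θ k C hC
    (by have := Submodule.finrank_mono hsup; omega) hinv
  refine ⟨g, ?_, hg⟩
  have htop : sumCode θ (n - (k + 1)) C = ⊤ := by
    apply Submodule.eq_top_of_finrank_eq
    rw [hsn]
    simp
  have hli : LinearIndependent F g := by
    rw [Fintype.linearIndependent_iff]
    intro a ha i
    let φ : (Fin n → E) →ₗ[E] E := ∑ j, algebraMap F E (a j) • LinearMap.proj j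
    have hφ : ∀ v, φ v = ∑ j, algebraMap F E (a j) * v j := by
      intro v
      simp [φ, Algebra.smul_def]
    have hφσ : ∀ (σ : E ≃ₐ[F] E) v, φ (fun i => σ (v i)) = σ (φ v) := by
      intro σ v
      simp [hφ, map_sum, map_mul]
    have hφg : φ g = 0 := by
      rw [hφ, ← ha]
      simp [Algebra.smul_def]
    have hker : sumCode θ (n - (k + 1)) C ≤ LinearMap.ker φ := by
      unfold sumCode
      apply iSup_le
      intro j v hv
      obtain ⟨w, hw, rfl⟩ := (aux_mem_map _ _ _).1 hv
      rw [LinearMap.mem_ker, hφσ]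
      have hwk : w ∈ LinearMap.ker φ := by
        rw [hg] at hw
        refine (Submodule.span_le.2 ?_) hw
        rintro _ ⟨l, rfl⟩
        change φ _ = 0
        rw [hφσ, hφg, map_zero]
      rw [LinearMap.mem_ker.1 hwk, map_zero]
    rw [htop] at hker
    have h1 : φ (Pi.single i 1) = 0 := hker Submodule.mem_top
    rw [hφ] at h1
    simpa [Pi.single_apply] using h1
  rw [finrank_span_eq_card hli, Fintype.card_fin]
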